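/- Let A ∈ ℂ^{N×N} be nonsingular and let Z ∈ ℂ^{N×n} have full column rank, with columns that are eigenvectors of A; that is, A Z = Z Λ for some diagonal matrix Λ ∈ ℂ^{n×n} whose diagonal entries are (necessarily nonzero) eigenvalues of A. Then E := Zᴴ A Z is invertible and ker(Zᴴ) ∩ range(A Z) = {0}. -/

import Mathlib

open Matrix

theorem isUnit_of_rank_ge {n : ℕ} (M : Matrix (Fin n) (Fin n) ℂ) (h : n ≤ M.rank) :
    IsUnit M := by
  rw [← Matrix.mulVec_surjective_iff_isUnit]
  have h1 : LinearMap.range M.mulVecLin = ⊤ := by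
    apply Submodule.eq_top_of_finrank_eq
    have h2 : M.rank ≤ n := by simpa using M.rank_le_width
    have h3 : M.rank = n := le_antisymm h2 h
    simpa [Matrix.rank] using h3
  exact LinearMap.range_eq_top.mp h1

/-- If the columns of a full-column-rank `Z` are eigenvectors of a nonsingular `A`
(`A Z = Z Λ` with `Λ` diagonal), then `E = Zᴴ A Z` is invertible and
`ker(Zᴴ) ∩ range(A Z) = {0}`. -/
theorem deflation_hypotheses_hold_for_eigenvector_columns
    {N n : ℕ}
    (A : Matrix (Fin N) (Fin N) ℂ) (hA : IsUnit A.det)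
    (Z : Matrix (Fin N) (Fin n) ℂ) (hZ : Z.rank = n)
    (Λ : Matrix (Fin n) (Fin n) ℂ) (hΛ : Λ.IsDiag) (hAZ : A * Z = Z * Λ) :
    IsUnit (Zᴴ * A * Z) ∧
      ∀ x : Fin N → ℂ, Zᴴ.mulVec x = 0 → x ∈ Set.range (A * Z).mulVec → x = 0 := by
  have hr : (Z * Λ).rank = n := by
    rw [← hAZ, Matrix.rank_mul_eq_right_of_isUnit_det A Z hA, hZ]
  have hL : IsUnit Λ := isUnit_of_rank_ge Λ (by
    have := Matrix.rank_mul_le_right Z Λ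
    omega)
  have hG : IsUnit (Zᴴ * Z) := isUnit_of_rank_ge _ (by
    open scoped ComplexOrder in
    rw [Matrix.rank_conjTranspose_mul_self, hZ])
  have hE : IsUnit (Zᴴ * A * Z) := by
    rw [Matrix.mul_assoc, hAZ, ← Matrix.mul_assoc]
    exact hG.mul hL
  refine ⟨hE, ?_⟩
  rintro x hx ⟨y, rfl⟩
  have hy : y = 0 := by
    apply Matrix.mulVec_injective_iff_isUnit.mpr hE
    rw [Matrix.mulVec_zero, Matrix.mul_assoc, ← Matrix.mulVec_mulVec]
    exact hx
  rw [hy, Matrix.mulVec_zero]
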